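/- (Submatrix Partial Permutation MMT) With block matrix [[B,U],[V,A]] (B n'×n', A n×n), n'-vectors θ', φ' and n-vectors θ, φ: Σ_r (1/r!) pperm_{β,θ̂,φ̂} [[B, U(n^r)],[V(n^r), A(n^r,n^r)]] = exp(θ(I-A)^{-1}φ^T) · pperm_{β, θ̃, φ̃}(B̃) / det(I-A)^β, where B̃ = B + U(I-A)^{-1}V, θ̃ = θ' + θ(I-A)^{-1}V, φ̃^T = φ'^T + U(I-A)^{-1}φ^T, and θ̂, φ̂ are the concatenated vectors (θ', θ repeated according to r), (φ', φ repeated according to r). -/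

import Mathlib

open scoped Classical
open Matrix

noncomputable section

/-- A partial permutation (injective partial map) of `α`: a domain together with
an injection of the domain into `α`. -/
abbrev PPerm (α : Type*) [Fintype α] [DecidableEq α] :=
  (D : Finset α) × ({x // x ∈ D} ↪ α)

variable {α : Type*} [Fintype α] [DecidableEq α]

/-- The partial function determined by a partial permutation. -/
def pfun (ψ : PPerm α) : α → Option α :=
  fun x => if h : x ∈ ψ.1 then some (ψ.2 ⟨x, h⟩) else none

/-- `k`-fold iteration of a partial permutation. -/
def piter (ψ : PPerm α) (k : ℕ) (x : α) : Option α :=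
  (fun o => o.bind (pfun ψ))^[k] (some x)

/-- The image of a partial permutation. -/
def pim (ψ : PPerm α) : Finset α := Finset.univ.image fun d => ψ.2 d

/-- `x` lies on a closed cycle of the partial permutation `ψ`. -/
def isCyc (ψ : PPerm α) (x : α) : Prop :=
  ∃ k ∈ Finset.range (Fintype.card α + 1), k ≠ 0 ∧ piter ψ k x = some x

/-- The forward orbit of `x` under `ψ`. -/
def porb (ψ : PPerm α) (x : α) : Finset α :=
  Finset.univ.filter fun y => ∃ k ∈ Finset.range (Fintype.card α + 1), piter ψ k x = some y

/-- The number of cycles `C(π_ψ)` of the permutation part of `ψ`. -/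
def pCycleCount (ψ : PPerm α) : ℕ :=
  ((Finset.univ.filter fun x => isCyc ψ x).image (porb ψ)).card

/-- The `(β,θ,φ)`-extended partial permanent of a matrix. -/
def ppermB {R : Type*} [CommRing R] (β : R) (θ φ : α → R) (M : Matrix α α R) : R :=
  ∑ ψ : PPerm α, β ^ pCycleCount ψ * (∏ d : {x // x ∈ ψ.1}, M d (ψ.2 d)) *
    (∏ j ∈ Finset.univ \ pim ψ, θ j) * (∏ k ∈ Finset.univ \ ψ.1, φ k)

/-- `A(n^r, n^r)`: index `i` repeated `r i` times. -/
def repA {n : ℕ} {R : Type*} (A : Matrix (Fin n) (Fin n) R) (r : Fin n → ℕ) :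
    Matrix ((i : Fin n) × Fin (r i)) ((i : Fin n) × Fin (r i)) R :=
  fun k l => A k.1 l.1

/-- `U(n^r)`: columns of `U` repeated according to `r`. -/
def repU {n' n : ℕ} {R : Type*} (U : Matrix (Fin n') (Fin n) R) (r : Fin n → ℕ) :
    Matrix (Fin n') ((i : Fin n) × Fin (r i)) R :=
  fun i' k => U i' k.1

/-- `V(n^r)`: rows of `V` repeated according to `r`. -/
def repV {n' n : ℕ} {R : Type*} (V : Matrix (Fin n) (Fin n') R) (r : Fin n → ℕ) :
    Matrix ((i : Fin n) × Fin (r i)) (Fin n') R :=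
  fun k j' => V k.1 j'


def st {τ : Type*} (f : τ → Option τ) (a b : τ) : Prop := f a = some b

/-- Forward orbit. -/
def orb {τ : Type*} [Fintype τ] (f : τ → Option τ) (x : τ) : Finset τ :=
  Finset.univ.filter fun y => Relation.ReflTransGen (st f) x y

/-- Cyclic points. -/
def cyc {τ : Type*} [Fintype τ] (f : τ → Option τ) : Finset τ :=
  Finset.univ.filter fun x => Relation.TransGen (st f) x x

/-- Number of cycles. -/
def cc {τ : Type*} [Fintype τ] (f : τ → Option τ) : ℕ := ((cyc f).image (orb f)).card

/-- Injectivity of a partial function. -/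
def PInj {τ : Type*} (f : τ → Option τ) : Prop :=
  ∀ a b c, f a = some c → f b = some c → a = b

/-- Weight of one point. -/
def wt {τ R : Type*} (M : Matrix τ τ R) (φ : τ → R) (a : τ) (o : Option τ) : R :=
  o.elim (φ a) (M a)

/-- Points outside the image. -/
def coim {τ : Type*} [Fintype τ] (f : τ → Option τ) : Finset τ :=
  Finset.univ.filter fun j => ∀ a, f a ≠ some j

/-- The partial injections. -/
def pinjs (τ : Type*) [Fintype τ] : Finset (τ → Option τ) :=
  Finset.univ.filter fun f => PInj f

/-- Partial permanent in terms of partial injections. -/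
def pp {τ R : Type*} [Fintype τ] [CommRing R] (β : R) (θ φ : τ → R) (M : Matrix τ τ R) : R :=
  ∑ f ∈ pinjs τ, β ^ cc f * ((∏ a, wt M φ a (f a)) * ∏ j ∈ coim f, θ j)

theorem mem_orb {τ : Type*} [Fintype τ] {f : τ → Option τ} {x y : τ} :
    y ∈ orb f x ↔ Relation.ReflTransGen (st f) x y := by simp [orb]

theorem mem_cyc {τ : Type*} [Fintype τ] {f : τ → Option τ} {x : τ} :
    x ∈ cyc f ↔ Relation.TransGen (st f) x x := by simp [cyc]

theorem orb_eq_iff {τ : Type*} [Fintype τ] {f : τ → Option τ} {x y : τ} :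
    orb f x = orb f y ↔
      Relation.ReflTransGen (st f) x y ∧ Relation.ReflTransGen (st f) y x := by
  constructor
  · intro h
    constructor
    · rw [← mem_orb, h, mem_orb]
    · rw [← mem_orb, ← h, mem_orb]
  · rintro ⟨h1, h2⟩
    ext z
    rw [mem_orb, mem_orb]
    exact ⟨fun h => h2.trans h, fun h => h1.trans h⟩

theorem mem_pinjs {τ : Type*} [Fintype τ] {f : τ → Option τ} : f ∈ pinjs τ ↔ PInj f := by
  simp [pinjs]

theorem mem_coim {τ : Type*} [Fintype τ] {f : τ → Option τ} {j : τ} :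
    j ∈ coim f ↔ ∀ a, f a ≠ some j := by
  simp [coim]

section deletion
variable {τ : Type*} [Fintype τ] {f : τ → Option τ} {f' : Option τ → Option (Option τ)}

/-- `f` is obtained from `f'` by deleting the point `none`. -/
def IsDel (f : τ → Option τ) (f' : Option τ → Option (Option τ)) : Prop :=
  ∀ y z, f y = some z ↔ f' (some y) = some (some z) ∨
    (f' (some y) = some none ∧ f' none = some (some z))

theorem del_step (h : IsDel f f') {y z : τ} (hs : st f y z) :
    Relation.TransGen (st f') (some y) (some z) := by
  rcases (h y z).1 hs with h1 | ⟨h1, h2⟩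
  · exact Relation.TransGen.single h1
  · exact Relation.TransGen.tail (b := none) (Relation.TransGen.single h1) h2

theorem del_trans (h : IsDel f f') {y z : τ} :
    Relation.TransGen (st f') (some y) (some z) ↔ Relation.TransGen (st f) y z := by
  constructor
  · intro ht
    have key : ∀ w, Relation.TransGen (st f') (some y) w →
        (∀ z, w = some z → Relation.TransGen (st f) y z) ∧
        (w = none → ∀ z, f' none = some (some z) → Relation.TransGen (st f) y z) := by
      intro w hw
      induction hw with
      | single h1 =>
        constructor
        · rintro z rfl
          exact Relation.TransGen.single ((h y z).2 (Or.inl h1))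
        · rintro rfl z hz
          exact Relation.TransGen.single ((h y z).2 (Or.inr ⟨h1, hz⟩))
      | @tail b c hb h1 ih =>
        constructor
        · rintro z rfl
          cases b with
          | none => exact ih.2 rfl z h1
          | some b => exact (ih.1 b rfl).tail ((h b z).2 (Or.inl h1))
        · rintro rfl z hz
          cases b with
          | none => exact ih.2 rfl z hz
          | some b => exact (ih.1 b rfl).tail ((h b z).2 (Or.inr ⟨h1, hz⟩))
    exact (key _ ht).1 z rfl
  · intro ht
    induction ht with
    | single h1 => exact del_step h h1
    | tail _ h1 ih => exact ih.trans (del_step h h1)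

theorem del_reflTrans (h : IsDel f f') {y z : τ} :
    Relation.ReflTransGen (st f') (some y) (some z) ↔ Relation.ReflTransGen (st f) y z := by
  rw [Relation.reflTransGen_iff_eq_or_transGen, Relation.reflTransGen_iff_eq_or_transGen,
    del_trans h]
  simp

theorem card_image_congr {ι A B : Type*} [DecidableEq A] [DecidableEq B] (s : Finset ι) (F : ι → A) (G : ι → B)
    (h : ∀ x ∈ s, ∀ y ∈ s, F x = F y ↔ G x = G y) : (s.image F).card = (s.image G).card := by
  rcases isEmpty_or_nonempty ι with hι | hι
  · have : s = ∅ := Finset.eq_empty_of_isEmpty s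
    simp [this]
  apply le_antisymm
  · have : ∀ b ∈ s.image F, ∃ x ∈ s, F x = b := by simp
    choose! g hg using this
    apply Finset.card_le_card_of_injOn (fun b => G (g b))
    · intro b hb
      exact Finset.mem_coe.2 (Finset.mem_image_of_mem _ (hg b hb).1)
    · intro b hb b' hb' he
      have := (h _ (hg b hb).1 _ (hg b' hb').1).2 he
      rw [(hg b hb).2, (hg b' hb').2] at this
      exact this
  · have : ∀ b ∈ s.image G, ∃ x ∈ s, G x = b := by simp
    choose! g hg using this
    apply Finset.card_le_card_of_injOn (fun b => F (g b))
    · intro b hb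
      exact Finset.mem_coe.2 (Finset.mem_image_of_mem _ (hg b hb).1)
    · intro b hb b' hb' he
      have := (h _ (hg b hb).1 _ (hg b' hb').1).1 he
      rw [(hg b hb).2, (hg b' hb').2] at this
      exact this

theorem del_image_card (h : IsDel f f') :
    ((cyc f).image (fun y => orb f' (some y))).card = cc f := by
  apply card_image_congr
  intro x _ y _
  rw [orb_eq_iff, orb_eq_iff, del_reflTrans h, del_reflTrans h]

theorem cc_noloop (h : IsDel f f') (hl : f' none ≠ some none) : cc f' = cc f := by
  rw [← del_image_card h, cc]
  congr 1
  ext S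
  simp only [Finset.mem_image]
  constructor
  · rintro ⟨w, hw, rfl⟩
    rw [mem_cyc] at hw
    cases w with
    | some y => exact ⟨y, mem_cyc.2 ((del_trans h).1 hw), rfl⟩
    | none =>
      obtain ⟨w, h1, h2⟩ := Relation.TransGen.head'_iff.1 hw
      cases w with
      | none => exact absurd h1 hl
      | some y =>
        refine ⟨y, mem_cyc.2 ((del_trans h).1 ?_), ?_⟩
        · exact Relation.TransGen.tail' h2 h1
        · exact orb_eq_iff.2 ⟨h2, Relation.ReflTransGen.single h1⟩
  · rintro ⟨y, hy, rfl⟩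
    exact ⟨some y, mem_cyc.2 ((del_trans h).2 (mem_cyc.1 hy)), rfl⟩

theorem cc_loop (h : IsDel f f') (hl : f' none = some none) : cc f' = cc f + 1 := by
  have horb : orb f' none = {none} := by
    ext z
    rw [mem_orb, Finset.mem_singleton]
    constructor
    · intro hz
      induction hz with
      | refl => rfl
      | tail _ h2 ih =>
        subst ih
        have h2' : f' none = some _ := h2
        rw [hl] at h2'
        exact (Option.some_injective _ h2').symm
    · rintro rfl
      exact Relation.ReflTransGen.refl
  have : cc f' =
      (insert {none} ((cyc f).image (fun y => orb f' (some y)))).card := by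
    unfold cc
    congr 1
    ext S
    simp only [Finset.mem_image, Finset.mem_insert]
    constructor
    · rintro ⟨w, hw, rfl⟩
      rw [mem_cyc] at hw
      cases w with
      | some y => exact Or.inr ⟨y, mem_cyc.2 ((del_trans h).1 hw), rfl⟩
      | none => exact Or.inl horb
    · rintro (rfl | ⟨y, hy, rfl⟩)
      · exact ⟨none, mem_cyc.2 (Relation.TransGen.single hl), horb⟩
      · exact ⟨some y, mem_cyc.2 ((del_trans h).2 (mem_cyc.1 hy)), rfl⟩
  rw [this, Finset.card_insert_of_notMem, del_image_card h]
  simp only [Finset.mem_image, not_exists, not_and]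
  intro y _ he
  have : some y ∈ orb f' (some y) := mem_orb.2 Relation.ReflTransGen.refl
  rw [he] at this
  simp at this

end deletion

/-! ### Reindexing -/

theorem st_trans_equiv {τ τ' : Type*} (e : τ ≃ τ') (f : τ → Option τ) (a b : τ) :
    Relation.TransGen (st fun x => (f (e.symm x)).map e) (e a) (e b) ↔
      Relation.TransGen (st f) a b := by
  constructor
  · intro h
    have := Relation.TransGen.lift (p := st f) e.symm (fun x y hxy => ?_) _ _ h
    · simpa [Function.onFun] using this
    · simp only [st, Option.map_eq_some_iff, Function.onFun] at hxy ⊢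
      obtain ⟨c, hc, rfl⟩ := hxy
      simpa using hc
  · intro h
    refine Relation.TransGen.lift e (fun x y hxy => ?_) _ _ h
    simp only [st, Function.onFun] at hxy ⊢
    simp [hxy]

theorem cc_equiv {τ τ' : Type*} [Fintype τ] [Fintype τ'] (e : τ ≃ τ') (f : τ → Option τ) :
    cc (fun x => (f (e.symm x)).map e) = cc f := by
  set f' : τ' → Option τ' := fun x => (f (e.symm x)).map e with hf'
  have h1 : cyc f' = (cyc f).image e := by
    ext z
    obtain ⟨y, rfl⟩ := e.surjective z
    rw [mem_cyc, st_trans_equiv]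
    simp [mem_cyc]
  rw [cc, h1, Finset.image_image, cc]
  apply card_image_congr
  intro x _ y _
  simp only [Function.comp]
  rw [orb_eq_iff, orb_eq_iff]
  simp only [Relation.reflTransGen_iff_eq_or_transGen, hf', st_trans_equiv, e.injective.eq_iff]

theorem pp_equiv {τ τ' R : Type*} [Fintype τ] [Fintype τ'] [CommRing R] (e : τ ≃ τ') (β : R)
    (θ φ : τ' → R) (M : Matrix τ' τ' R) :
    pp β (θ ∘ e) (φ ∘ e) (M.submatrix e e) = pp β θ φ M := by
  unfold pp
  refine Finset.sum_bij' (fun f _ => fun x => (f (e.symm x)).map e)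
    (fun f _ => fun x => (f (e x)).map e.symm) ?_ ?_ ?_ ?_ ?_
  · intro f hf
    simp only [mem_pinjs, PInj, Option.map_eq_some_iff] at hf ⊢
    rintro a b c ⟨u, hu, rfl⟩ ⟨v, hv, hvu⟩
    have := e.injective hvu
    subst this
    simpa using hf _ _ _ hu hv
  · intro f hf
    simp only [mem_pinjs, PInj, Option.map_eq_some_iff] at hf ⊢
    rintro a b c ⟨u, hu, rfl⟩ ⟨v, hv, hvu⟩
    have := e.symm.injective hvu
    subst this
    simpa using hf _ _ _ hu hv
  · intro f hf
    ext x : 1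
    simp [Option.map_map]
  · intro f hf
    ext x : 1
    simp [Option.map_map]
  · intro f hf
    rw [cc_equiv]
    congr 2
    · rw [← e.prod_comp]
      refine Finset.prod_congr rfl fun a _ => ?_
      simp only [Equiv.symm_apply_apply]
      cases f a <;> simp [wt]
    · have : coim (fun x => (f (e.symm x)).map e) = (coim f).map e.toEmbedding := by
        ext z
        obtain ⟨y, rfl⟩ := e.surjective z
        simp only [coim, Finset.mem_filter, Finset.mem_univ, true_and, Finset.mem_map_equiv,
          Equiv.symm_apply_apply]
        constructor
        · intro h a ha
          exact h (e a) (by simp [ha])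
        · intro h a ha
          simp only [Option.map_eq_some_iff] at ha
          obtain ⟨c, hc, hcy⟩ := ha
          exact h _ (by rw [hc, e.injective hcy])
      rw [this, Finset.prod_map]
      simp

/-! ### Bridge to `ppermB` -/

section bridge
variable {τ : Type*} [Fintype τ] [DecidableEq τ]

theorem piter_zero (ψ : PPerm τ) (x : τ) : piter ψ 0 x = some x := rfl

theorem piter_succ (ψ : PPerm τ) (k : ℕ) (x : τ) :
    piter ψ (k + 1) x = (piter ψ k x).bind (pfun ψ) := by
  simp only [piter, Function.iterate_succ_apply']

theorem piter_add (ψ : PPerm τ) (i j : ℕ) (x : τ) :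
    piter ψ (i + j) x = (piter ψ i x).bind (piter ψ j) := by
  induction j with
  | zero => 
    rw [Nat.add_zero]
    have : piter ψ 0 = some := rfl
    rw [this]; cases piter ψ i x <;> rfl
  | succ j ih =>
    rw [← Nat.add_assoc, piter_succ, ih]
    cases piter ψ i x with
    | none => rfl
    | some y => simp [piter_succ]

theorem piter_bound (ψ : PPerm τ) (x y : τ) (k : ℕ) (hk : k ≠ 0) (h : piter ψ k x = some y) :
    ∃ k' ∈ Finset.range (Fintype.card τ + 1), k' ≠ 0 ∧ piter ψ k' x = some y := by
  induction k using Nat.strong_induction_on with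
  | _ k ih =>
    by_cases hc : k ≤ Fintype.card τ
    · exact ⟨k, Finset.mem_range.2 (by omega), hk, h⟩
    have hv : ∀ i : Fin k, ∃ z, piter ψ i x = some z := by
      intro i
      have h1 : k = i + (k - i) := by omega
      rw [h1, piter_add] at h
      cases hz : piter ψ i x with
      | none => rw [hz] at h; simp at h
      | some z => exact ⟨z, rfl⟩
    choose v hv using hv
    obtain ⟨i, j, hij, he⟩ := Fintype.exists_ne_map_eq_of_card_lt v (by simp; omega)
    have main : ∀ i j : Fin k, i < j → v i = v j → 
        ∃ k' ∈ Finset.range (Fintype.card τ + 1), k' ≠ 0 ∧ piter ψ k' x = some y := by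
      intro i j hlt he
      have hlt' : (i : ℕ) < j := hlt
      have hj := j.2
      refine ih (i + (k - j)) (by omega) (by omega) ?_
      rw [piter_add, hv, he, ← hv, ← piter_add]
      have h1 : j + (k - j) = k := by omega
      rw [h1, h]
    rcases lt_or_gt_of_ne hij with h1 | h1
    · exact main i j h1 he
    · exact main j i h1 he.symm

theorem piter_trans (ψ : PPerm τ) (x y : τ) :
    Relation.TransGen (st (pfun ψ)) x y ↔ ∃ k, k ≠ 0 ∧ piter ψ k x = some y := by
  constructor
  · intro h
    induction h with
    | single h1 => exact ⟨1, one_ne_zero, by rw [piter_succ, piter_zero]; exact h1⟩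
    | tail _ h1 ih =>
      obtain ⟨k, hk, he⟩ := ih
      refine ⟨k + 1, by omega, ?_⟩
      rw [piter_succ, he]
      exact h1
  · rintro ⟨k, hk, h⟩
    obtain ⟨k, rfl⟩ := Nat.exists_eq_succ_of_ne_zero hk
    clear hk
    induction k generalizing y with
    | zero =>
      rw [piter_succ, piter_zero] at h
      exact Relation.TransGen.single h
    | succ k ih =>
      rw [piter_succ] at h
      cases hz : piter ψ (k + 1) x with
      | none => rw [hz] at h; simp at h
      | some z => 
        rw [hz] at h
        exact (ih z hz).tail h

theorem pCycleCount_eq (ψ : PPerm τ) : pCycleCount ψ = cc (pfun ψ) := by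
  have h1 : (Finset.univ.filter fun x => isCyc ψ x) = cyc (pfun ψ) := by
    ext x
    rw [mem_cyc, piter_trans]
    rw [Finset.mem_filter]
    simp only [isCyc, Finset.mem_univ, true_and]
    constructor
    · rintro ⟨k, _, h⟩
      exact ⟨k, h⟩
    · rintro ⟨k, hk, h⟩
      exact piter_bound ψ x x k hk h
  have h2 : porb ψ = orb (pfun ψ) := by
    funext x
    ext y
    rw [mem_orb, Relation.reflTransGen_iff_eq_or_transGen, piter_trans]
    simp only [porb, Finset.mem_filter, Finset.mem_univ, true_and]
    constructor
    · rintro ⟨k, _, h⟩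
      by_cases hk : k = 0
      · subst hk
        rw [piter_zero] at h
        exact Or.inl (Option.some_injective _ h).symm
      · exact Or.inr ⟨k, hk, h⟩
    · rintro (rfl | ⟨k, hk, h⟩)
      · exact ⟨0, by simp, piter_zero _ _⟩
      · obtain ⟨k', h1, _, h2⟩ := piter_bound ψ x y k hk h
        exact ⟨k', h1, h2⟩
  unfold pCycleCount cc
  rw [h2]
  congr 1
  ext S
  simp only [Finset.mem_image, ← h1]

theorem pfun_of_mem (ψ : PPerm τ) (x : τ) (h : x ∈ ψ.1) : pfun ψ x = some (ψ.2 ⟨x, h⟩) := by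
  simp [pfun, h]

theorem pfun_of_notMem (ψ : PPerm τ) (x : τ) (h : x ∉ ψ.1) : pfun ψ x = none := by
  simp [pfun, h]

theorem ppermB_eq {R : Type*} [CommRing R] (β : R) (θ φ : τ → R) (M : Matrix τ τ R) :
    ppermB β θ φ M = pp β θ φ M := by
  unfold ppermB pp
  refine Finset.sum_bij (fun ψ _ => pfun ψ) ?_ ?_ ?_ ?_
  · intro ψ _
    rw [mem_pinjs]
    intro a b c ha hb
    have hha : a ∈ ψ.1 := by
      by_contra h
      rw [pfun_of_notMem _ _ h] at ha; simp at ha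
    have hhb : b ∈ ψ.1 := by
      by_contra h
      rw [pfun_of_notMem _ _ h] at hb; simp at hb
    rw [pfun_of_mem _ _ hha] at ha
    rw [pfun_of_mem _ _ hhb] at hb
    have := ψ.2.injective (Option.some_injective _ (ha.trans hb.symm))
    exact congrArg Subtype.val this
  · rintro ⟨D, i⟩ _ ⟨D', i'⟩ _ h
    have hD : D = D' := by
      ext x
      have := congrFun h x
      simp only [pfun] at this
      by_cases h1 : x ∈ D <;> by_cases h2 : x ∈ D' <;> simp [h1, h2] at this ⊢
    subst hD
    congr 1
    ext ⟨x, hx⟩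
    have := congrFun h x
    simp only [pfun, hx, dif_pos] at this
    exact Option.some_injective _ this
  · intro f hf
    rw [mem_pinjs] at hf
    have hs : ∀ d : {x // x ∈ Finset.univ.filter fun x => (f x).isSome}, (f d).isSome := by
      intro d
      exact (Finset.mem_filter.1 d.2).2
    refine ⟨⟨Finset.univ.filter fun x => (f x).isSome, 
      ⟨fun d => (f d).get (hs d), ?_⟩⟩, Finset.mem_univ _, ?_⟩
    · intro d d' h
      apply Subtype.ext
      refine hf _ _ ((f d).get (hs d)) (by simp) ?_
      simp only at h
      rw [h]; simp
    · funext x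
      by_cases h : (f x).isSome
      · rw [pfun_of_mem _ _ (by simp [h])]
        exact Option.some_get h
      · rw [pfun_of_notMem _ _ (by simpa using h)]
        rw [Bool.not_eq_true, Option.isSome_eq_false_iff, Option.isNone_iff_eq_none] at h
        exact h.symm
  · intro ψ _
    rw [pCycleCount_eq, mul_assoc, mul_assoc]
    congr 1
    have h1 : (∏ a, wt M φ a (pfun ψ a)) =
        (∏ d : {x // x ∈ ψ.1}, M d (ψ.2 d)) * ∏ k ∈ Finset.univ \ ψ.1, φ k := by
      rw [← Finset.prod_sdiff (Finset.subset_univ ψ.1), mul_comm]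
      congr 1
      · rw [← Finset.prod_coe_sort]
        refine Finset.prod_congr rfl fun d _ => ?_
        rw [pfun_of_mem _ _ d.2]
        rfl
      · refine Finset.prod_congr rfl fun k hk => ?_
        rw [pfun_of_notMem _ _ (by simpa using hk)]
        rfl
    have h2 : Finset.univ \ pim ψ = coim (pfun ψ) := by
      ext j
      rw [mem_coim]
      simp only [pim, Finset.mem_sdiff, Finset.mem_univ, true_and, Finset.mem_image, not_exists]
      constructor
      · intro h a ha
        by_cases hm : a ∈ ψ.1
        · rw [pfun_of_mem _ _ hm] at ha
          exact h _ (Option.some_injective _ ha)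
        · rw [pfun_of_notMem _ _ hm] at ha; simp at ha
      · intro h d hd
        exact h d (by rw [pfun_of_mem _ _ d.2, ← hd])
    rw [h1, h2]
    ring

end bridge

/-! ### Insertion of a point -/

section insertion
variable {τ : Type*} [Fintype τ]

/-- Insert the new point `none` in a slot. -/
def ins (f : τ → Option τ) : Bool ⊕ (τ ⊕ τ) → Option τ → Option (Option τ)
  | Sum.inl true => fun o => o.elim none (fun y => (f y).map some)
  | Sum.inl false => fun o => o.elim (some none) (fun y => (f y).map some)
  | Sum.inr (Sum.inl a) => fun o => o.elim ((f a).map some)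
      (fun y => if y = a then some none else (f y).map some)
  | Sum.inr (Sum.inr b) => fun o => o.elim (some (some b)) (fun y => (f y).map some)

/-- The available slots. -/
def slots (f : τ → Option τ) : Finset (Bool ⊕ (τ ⊕ τ)) :=
  Finset.disjSum Finset.univ (Finset.disjSum Finset.univ (coim f))

theorem isDel_ins (f : τ → Option τ) (s : Bool ⊕ (τ ⊕ τ)) : IsDel f (ins f s) := by
  intro y z
  rcases s with (_ | _) | a | b
  · simp [ins]
  · simp [ins]
  · by_cases h : y = a
    · subst h; simp [ins]
    · simp [ins, h]
  · simp [ins]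

theorem isDel_unique {f g : τ → Option τ} {f' : Option τ → Option (Option τ)}
    (hf : IsDel f f') (hg : IsDel g f') : f = g := by
  funext y
  ext z
  rw [hf, hg]

theorem ins_inj (f : τ → Option τ) (hf : PInj f) (s : Bool ⊕ (τ ⊕ τ)) (hs : s ∈ slots f) :
    PInj (ins f s) := by
  intro x y z hx hy
  rcases s with (_ | _) | a | b
  · cases x <;> cases y <;> simp [ins] at hx hy ⊢ <;> grind [PInj]
  · cases x <;> cases y <;> simp [ins] at hx hy ⊢ <;> grind [PInj]
  · cases x with
    | none => 
      cases y with
      | none => rfl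
      | some y =>
        by_cases h : y = a
        · simp [ins, h] at hx hy; grind
        · simp [ins, h] at hx hy; grind [PInj]
    | some x => 
      cases y with
      | none =>
        by_cases h : x = a
        · simp [ins, h] at hx hy; grind
        · simp [ins, h] at hx hy; grind [PInj]
      | some y =>
        by_cases h : x = a <;> by_cases h' : y = a <;> simp [ins, h, h'] at hx hy ⊢ <;>
          grind [PInj]
  · have : ∀ a, f a ≠ some b := by simpa [slots, mem_coim] using hs
    cases x <;> cases y <;> simp [ins] at hx hy ⊢ <;> grind [PInj]

theorem ins_slot_inj (f : τ → Option τ) (s t : Bool ⊕ (τ ⊕ τ)) (hs : s ∈ slots f)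
    (ht : t ∈ slots f) (h : ins f s = ins f t) : s = t := by
  have h0 := congrFun h none
  have h1 : ∀ y, ins f s (some y) = ins f t (some y) := fun y => congrFun h (some y)
  rcases s with (_ | _) | a | b <;> rcases t with (_ | _) | a' | b' <;>
    simp [ins] at h0 h1 ⊢ <;> try grind
  by_contra hne
  have h2 := h1 a
  rw [if_pos rfl, if_neg hne] at h2
  cases hfa : f a <;> simp [hfa] at h2

theorem ins_surj (f' : Option τ → Option (Option τ)) (hf' : PInj f') :
    ∃ f, PInj f ∧ ∃ s ∈ slots f, ins f s = f' := by
  let f : τ → Option τ := fun y => 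
    match f' (some y) with
    | none => none
    | some (some z) => some z
    | some none => (f' none).join
  have hdel : IsDel f f' := by
    intro y z
    simp only [f]
    rcases h : f' (some y) with _ | _ | w
    · simp
    · rcases h : f' none with _ | _ | w <;> simp 
    · simp
  have hinj : PInj f := by
    intro a b c ha hb
    rw [hdel] at ha hb
    have : some a = some b := by
      rcases ha with h1 | ⟨h1, h2⟩ <;> rcases hb with h3 | ⟨h3, h4⟩
      · exact hf' _ _ _ h1 h3
      · exact absurd (hf' _ _ _ h1 h4) (by simp)
      · exact absurd (hf' _ _ _ h3 h2) (by simp)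
      · exact hf' _ _ _ h1 h3
    exact Option.some_injective _ this
  refine ⟨f, hinj, ?_⟩
  by_cases hp : ∃ a, f' (some a) = some none
  · obtain ⟨a, ha⟩ := hp
    refine ⟨Sum.inr (Sum.inl a), by simp [slots], ?_⟩
    funext o
    rcases o with _ | y
    · simp only [ins, Option.elim, f, ha]
      rcases h : f' none with _ | _ | w
      · simp
      · exact absurd (hf' _ _ _ ha h) (by simp)
      · simp
    · simp only [ins, Option.elim, f]
      by_cases hy : y = a
      · subst hy; simp [ha]
      · rw [if_neg hy]
        rcases h : f' (some y) with _ | _ | w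
        · simp
        · exact absurd (Option.some_injective _ (hf' _ _ _ h ha)) hy
        · simp
  · have hsome : ∀ y, (f y).map some = f' (some y) := by
      intro y
      simp only [f]
      rcases h : f' (some y) with _ | _ | w
      · simp
      · exact absurd ⟨y, h⟩ hp
      · simp
    rcases h : f' none with _ | _ | b
    · refine ⟨Sum.inl true, by simp [slots], ?_⟩
      funext o
      rcases o with _ | y
      · simp [ins, h]
      · simp [ins, hsome]
    · refine ⟨Sum.inl false, by simp [slots], ?_⟩
      funext o
      rcases o with _ | y
      · simp [ins, h]
      · simp [ins, hsome]
    · refine ⟨Sum.inr (Sum.inr b), ?_, ?_⟩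
      · simp only [slots, Finset.inr_mem_disjSum, mem_coim]
        intro a ha
        have h2 := hsome a
        rw [ha] at h2
        exact absurd (hf' _ _ _ h h2.symm) (by simp)
      · funext o
        rcases o with _ | y
        · simp [ins, h]
        · simp [ins, hsome]

theorem sum_ins {R : Type*} [AddCommMonoid R] (F : (Option τ → Option (Option τ)) → R) :
    ∑ f' ∈ pinjs (Option τ), F f' = ∑ f ∈ pinjs τ, (F (ins f (Sum.inl true)) +
      F (ins f (Sum.inl false)) + (∑ a, F (ins f (Sum.inr (Sum.inl a))) +
      ∑ b ∈ coim f, F (ins f (Sum.inr (Sum.inr b))))) := by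
  have h1 : ∑ f' ∈ pinjs (Option τ), F f' =
      ∑ p ∈ (pinjs τ).sigma slots, F (ins p.1 p.2) := by
    symm
    refine Finset.sum_bij (fun p _ => ins p.1 p.2) ?_ ?_ ?_ ?_
    · rintro ⟨f, s⟩ h
      rw [Finset.mem_sigma] at h
      exact mem_pinjs.2 (ins_inj f (mem_pinjs.1 h.1) s h.2)
    · rintro ⟨f, s⟩ h ⟨g, t⟩ h' he
      rw [Finset.mem_sigma] at h h'
      simp only at he h h'
      have : f = g := isDel_unique (isDel_ins f s) (he ▸ isDel_ins g t)
      subst this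
      rw [ins_slot_inj f s t h.2 h'.2 he]
    · intro f' hf'
      obtain ⟨f, h1, s, h2, h3⟩ := ins_surj f' (mem_pinjs.1 hf')
      exact ⟨⟨f, s⟩, Finset.mem_sigma.2 ⟨mem_pinjs.2 h1, h2⟩, h3⟩
    · intros; rfl
  rw [h1, Finset.sum_sigma]
  refine Finset.sum_congr rfl fun f _ => ?_
  simp only [slots, Finset.sum_disjSum]
  simp

theorem prod_coim_option {R : Type*} [CommRing R] (f' : Option τ → Option (Option τ))
    (θ : Option τ → R) :
    ∏ j ∈ coim f', θ j = (if none ∈ coim f' then θ none else 1) *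
      ∏ j ∈ Finset.univ.filter (fun j => some j ∈ coim f'), θ (some j) := by
  have : ∏ j ∈ coim f', θ j = ∏ j, if j ∈ coim f' then θ j else 1 := by
    rw [← Finset.prod_filter]; congr 1; ext; simp
  rw [this, Fintype.prod_option, Finset.prod_filter]

theorem pp_option {R : Type*} [CommRing R] (β : R) (θ φ : Option τ → R)
    (M : Matrix (Option τ) (Option τ) R) :
    pp β θ φ M = ∑ f ∈ pinjs τ, β ^ cc f *
      ((θ none * φ none + β * M none none) *
          ((∏ a, wt (M.submatrix some some) (φ ∘ some) a (f a)) * ∏ j ∈ coim f, θ (some j)) +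
        ((∑ a, (∏ c ∈ Finset.univ.erase a, wt (M.submatrix some some) (φ ∘ some) c (f c)) *
            (M (some a) none * (f a).elim (φ none) (fun b => M none (some b)))) *
            ∏ j ∈ coim f, θ (some j) +
          (∏ a, wt (M.submatrix some some) (φ ∘ some) a (f a)) *
            ∑ b ∈ coim f, (∏ j ∈ (coim f).erase b, θ (some j)) * (θ none * M none (some b)))) := by
  unfold pp
  rw [sum_ins]
  refine Finset.sum_congr rfl fun f hf => ?_
  have hw : ∀ y, wt M φ (some y) ((f y).map some) =
      wt (M.submatrix some some) (φ ∘ some) y (f y) := by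
    intro y
    cases f y <;> simp [wt]
  have hc : ∀ s, s ≠ Sum.inl false → cc (ins f s) = cc f := by
    intro s hs
    apply cc_noloop (isDel_ins f s)
    rcases s with (_ | _) | a | b <;> simp [ins] at hs ⊢
  have hc' : cc (ins f (Sum.inl false)) = cc f + 1 := cc_loop (isDel_ins f _) rfl
  rw [mul_add, mul_add, Finset.sum_mul, Finset.mul_sum, Finset.mul_sum, Finset.mul_sum]
  congr 1
  · have c1 : none ∈ coim (ins f (Sum.inl true)) := by
      rw [mem_coim]; rintro (_ | a) <;> simp [ins]
    have c2 : none ∉ coim (ins f (Sum.inl false)) := by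
      rw [mem_coim]; push Not; exact ⟨none, rfl⟩
    have c3 : (Finset.univ.filter fun j => some j ∈ coim (ins f (Sum.inl true))) = coim f := by
      ext j; simp [mem_coim, Option.forall, ins]
    have c4 : (Finset.univ.filter fun j => some j ∈ coim (ins f (Sum.inl false))) = coim f := by
      ext j; simp [mem_coim, Option.forall, ins]
    rw [hc _ (by simp), hc', prod_coim_option, prod_coim_option, if_pos c1, if_neg c2, c3, c4,
      Fintype.prod_option, Fintype.prod_option]
    simp only [ins, Option.elim, hw]
    simp only [wt, Option.elim]
    ring
  · congr 1
    · refine Finset.sum_congr rfl fun a _ => ?_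
      have c1 : none ∉ coim (ins f (Sum.inr (Sum.inl a))) := by
        rw [mem_coim]; push Not; exact ⟨some a, by simp [ins]⟩
      have c3 : (Finset.univ.filter fun j => some j ∈ coim (ins f (Sum.inr (Sum.inl a)))) =
          coim f := by
        ext j
        simp only [mem_coim, Option.forall, ins, Option.elim, Finset.mem_filter,
          Finset.mem_univ, true_and]
        constructor
        · rintro ⟨h1, h2⟩ y hy
          have := h2 y
          by_cases h : y = a
          · subst h; simp [hy] at h1
          · simp [h, hy] at this
        · intro h
          refine ⟨by simpa using h a, fun y => ?_⟩
          split_ifs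
          · simp
          · simpa using h y
      rw [hc _ (by simp), prod_coim_option, if_neg c1, c3, Fintype.prod_option]
      simp only [ins, Option.elim]
      rw [← Finset.mul_prod_erase Finset.univ _ (Finset.mem_univ a)]
      have : ∀ c ∈ Finset.univ.erase a, wt M φ (some c)
          (if c = a then some none else (f c).map some) =
          wt (M.submatrix some some) (φ ∘ some) c (f c) := by
        intro c hcc
        rw [if_neg (Finset.ne_of_mem_erase hcc), hw]
      rw [Finset.prod_congr rfl this, if_pos rfl]
      have h5 : wt M φ none ((f a).map some) = 
          (f a).elim (φ none) (fun b => M none (some b)) := by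
        cases f a <;> simp [wt]
      rw [h5]
      simp only [wt, Option.elim]
      ring
    · refine Finset.sum_congr rfl fun b hb => ?_
      have c1 : none ∈ coim (ins f (Sum.inr (Sum.inr b))) := by
        rw [mem_coim]; rintro (_ | a) <;> simp [ins]
      have c3 : (Finset.univ.filter fun j => some j ∈ coim (ins f (Sum.inr (Sum.inr b)))) =
          (coim f).erase b := by
        ext j; simp [mem_coim, Option.forall, ins, eq_comm]
      rw [hc _ (by simp), prod_coim_option, if_pos c1, c3, Fintype.prod_option]
      simp only [ins, Option.elim, hw]
      simp only [wt, Option.elim]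
      ring

end insertion

/-! ### The flow -/

section flow

theorem pp_map {τ R S : Type*} [Fintype τ] [CommRing R] [CommRing S] (h : R →+* S) (β : R)
    (θ φ : τ → R) (M : Matrix τ τ R) :
    h (pp β θ φ M) = pp (h β) (fun a => h (θ a)) (fun a => h (φ a)) (M.map h) := by
  unfold pp
  rw [map_sum]
  refine Finset.sum_congr rfl fun f _ => ?_
  rw [map_mul, map_pow, map_mul, map_prod, map_prod]
  congr 2
  refine Finset.prod_congr rfl fun a _ => ?_
  cases f a <;> simp [wt]

theorem pp_hasDerivAt {τ : Type*} [Fintype τ] (β : ℂ) (θ φ : ℂ → τ → ℂ) (M : ℂ → Matrix τ τ ℂ)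
    (θ' φ' : τ → ℂ) (M' : Matrix τ τ ℂ) (t : ℂ)
    (hθ : ∀ a, HasDerivAt (fun t => θ t a) (θ' a) t)
    (hφ : ∀ a, HasDerivAt (fun t => φ t a) (φ' a) t)
    (hM : ∀ a b, HasDerivAt (fun t => M t a b) (M' a b) t) :
    HasDerivAt (fun t => pp β (θ t) (φ t) (M t))
      (∑ f ∈ pinjs τ, β ^ cc f *
        ((∑ a, (∏ c ∈ Finset.univ.erase a, wt (M t) (φ t) c (f c)) * wt M' φ' a (f a)) *
          ∏ j ∈ coim f, θ t j +
        (∏ a, wt (M t) (φ t) a (f a)) *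
          ∑ b ∈ coim f, (∏ j ∈ (coim f).erase b, θ t j) * θ' b)) t := by
  unfold pp
  refine HasDerivAt.fun_sum fun f _ => ?_
  refine HasDerivAt.const_mul _ ?_
  refine HasDerivAt.mul ?_ ?_
  · have : ∀ a ∈ (Finset.univ : Finset τ), HasDerivAt (fun t => wt (M t) (φ t) a (f a))
        (wt M' φ' a (f a)) t := by
      intro a _
      cases f a with
      | none => exact hφ a
      | some b => exact hM a b
    simpa only [smul_eq_mul] using HasDerivAt.fun_finsetProd this
  · simpa only [smul_eq_mul] using HasDerivAt.fun_finsetProd (u := coim f) (fun a _ => hθ a)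

/-- Schur type flow: `c + t u v / (1 - t a)`. -/
def fl {R : Type*} [Field R] (a t c u v : R) : R := c + t * u * v / (1 - t * a)

/-- flow of the matrix. -/
def flM {σ R : Type*} [Field R] (M : Matrix σ σ R) (x : σ) (t : R) : Matrix σ σ R :=
  fun a b => fl (M x x) t (M a b) (M a x) (M x b)

/-- flow of the first vector. -/
def flT {σ R : Type*} [Field R] (M : Matrix σ σ R) (θ : σ → R) (x : σ) (t : R) : σ → R :=
  fun b => fl (M x x) t (θ b) (θ x) (M x b)

/-- flow of the second vector. -/
def flP {σ R : Type*} [Field R] (M : Matrix σ σ R) (φ : σ → R) (x : σ) (t : R) : σ → R :=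
  fun a => fl (M x x) t (φ a) (M a x) (φ x)

/-- The prefactor. -/
def pref (β a w t : ℂ) : ℂ :=
  Complex.exp (t * w / (1 - t * a)) * Complex.exp (-β * Complex.log (1 - t * a))

theorem fl_hasDerivAt (a t c u v : ℂ) (h : 1 - t * a ≠ 0) :
    HasDerivAt (fun t => fl a t c u v) ((u / (1 - t * a)) * (v / (1 - t * a))) t := by
  unfold fl
  have h1 : HasDerivAt (fun t : ℂ => t * u * v) (1 * u * v) t :=
    ((hasDerivAt_id t).mul_const u).mul_const v
  have h2 : HasDerivAt (fun t : ℂ => 1 - t * a) (-(1 * a)) t :=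
    ((hasDerivAt_id t).mul_const a).const_sub 1
  refine ((h1.div h2 h).const_add c).congr_deriv ?_
  field_simp
  ring

theorem fl_left (a t c : ℂ) (h : 1 - t * a ≠ 0) : fl a t c c a = c / (1 - t * a) := by
  unfold fl; field_simp; ring

theorem fl_right (a t c : ℂ) (h : 1 - t * a ≠ 0) : fl a t c a c = c / (1 - t * a) := by
  unfold fl; field_simp; ring

theorem pref_hasDerivAt (β a w t : ℂ) (h : 1 - t * a ∈ Complex.slitPlane) :
    HasDerivAt (pref β a w)
      (pref β a w t * (w / (1 - t * a) / (1 - t * a) + β * (a / (1 - t * a)))) t := by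
  have h0 : 1 - t * a ≠ 0 := Complex.slitPlane_ne_zero h
  have h2 : HasDerivAt (fun t : ℂ => 1 - t * a) (-(1 * a)) t :=
    ((hasDerivAt_id t).mul_const a).const_sub 1
  have h1 : HasDerivAt (fun t : ℂ => t * w) (1 * w) t := (hasDerivAt_id t).mul_const w
  have h3 := (h1.div h2 h0).cexp
  have h4 := ((h2.clog h).const_mul (-β)).cexp
  unfold pref
  refine (h3.mul h4).congr_deriv ?_
  simp only [Pi.div_apply]
  field_simp
  ring

theorem flow_hasDerivAt {σ τ : Type*} [Fintype τ] (β : ℂ) (θ φ : σ → ℂ) (M : Matrix σ σ ℂ)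
    (x : σ) (π : τ → σ) (t : ℂ) (h : 1 - t * M x x ∈ Complex.slitPlane) :
    HasDerivAt (fun t => pref β (M x x) (θ x * φ x) t *
        pp β (flT M θ x t ∘ π) (flP M φ x t ∘ π) ((flM M x t).submatrix π π))
      (pref β (M x x) (θ x * φ x) t *
        pp β (flT M θ x t ∘ fun o : Option τ => o.elim x π)
          (flP M φ x t ∘ fun o : Option τ => o.elim x π)
          ((flM M x t).submatrix (fun o : Option τ => o.elim x π)
            (fun o : Option τ => o.elim x π))) t := by
  have h0 : 1 - t * M x x ≠ 0 := Complex.slitPlane_ne_zero h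
  have hd := (pref_hasDerivAt β (M x x) (θ x * φ x) t h).mul
    (pp_hasDerivAt β (fun t => flT M θ x t ∘ π) (fun t => flP M φ x t ∘ π)
      (fun t => (flM M x t).submatrix π π) _ _
      (fun a b => ((M (π a) x) / (1 - t * M x x)) * ((M x (π b)) / (1 - t * M x x))) t
      (fun a => fl_hasDerivAt _ _ _ _ _ h0) (fun a => fl_hasDerivAt _ _ _ _ _ h0)
      (fun a b => fl_hasDerivAt _ _ _ _ _ h0))
  refine hd.congr_deriv ?_
  symm
  rw [pp_option, mul_assoc, ← mul_add]
  congr 1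
  unfold pp
  rw [Finset.mul_sum, ← Finset.sum_add_distrib]
  refine Finset.sum_congr rfl fun f _ => ?_
  have e1 : flT M θ x t x = θ x / (1 - t * M x x) := fl_left _ _ _ h0
  have e2 : flP M φ x t x = φ x / (1 - t * M x x) := fl_right _ _ _ h0
  have e3 : flM M x t x x = M x x / (1 - t * M x x) := fl_left _ _ _ h0
  have e4 : ∀ a, flM M x t a x = M a x / (1 - t * M x x) := fun a => fl_left _ _ _ h0
  have e5 : ∀ a, flM M x t x a = M x a / (1 - t * M x x) := fun a => fl_right _ _ _ h0
  simp only [Function.comp_def, Matrix.submatrix_apply, Option.elim_none, Option.elim_some, e1, e2, e4, e5,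
    Matrix.submatrix_submatrix]
  have hw : ∀ a, (M (π a) x / (1 - t * M x x) * (f a).elim (φ x / (1 - t * M x x))
      (fun b => M x (π b) / (1 - t * M x x))) =
      wt (fun a b => ((M (π a) x) / (1 - t * M x x)) * ((M x (π b)) / (1 - t * M x x)))
       (fun a => M (π a) x / (1 - t * M x x) * (φ x / (1 - t * M x x))) a (f a) := by
    intro a
    cases f a <;> rfl
  simp only [hw]
  rw [div_mul_div_comm, ← div_div]
  ring

theorem exists_fin_equiv {σ τ : Type*} (π : τ → σ) (x : σ) (k : ℕ) :
    ∃ e : Option (τ ⊕ Fin k) ≃ τ ⊕ Fin (k + 1),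
      (Sum.elim π (fun _ => x)) ∘ e = fun o => o.elim x (Sum.elim π (fun _ => x)) := by
  have e0 : Fin k ⊕ PUnit.{1} ≃ Fin (k + 1) := Fintype.equivOfCardEq (by simp)
  refine ⟨(Equiv.optionEquivSumPUnit _).trans ((Equiv.sumAssoc _ _ _).trans
    (Equiv.sumCongr (Equiv.refl _) e0)), ?_⟩
  funext o
  rcases o with _ | a | b <;> simp

theorem one_index_complex {σ τ : Type*} [Fintype τ] (β : ℂ) (θ φ : σ → ℂ) (M : Matrix σ σ ℂ)
    (x : σ) (π : τ → σ) (hx : ‖M x x‖ < 1) :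
    HasSum (fun k : ℕ => ((k.factorial : ℂ)⁻¹) *
        pp β (θ ∘ Sum.elim π (fun _ : Fin k => x)) (φ ∘ Sum.elim π (fun _ : Fin k => x))
          (M.submatrix (Sum.elim π (fun _ : Fin k => x)) (Sum.elim π (fun _ : Fin k => x))))
      (pref β (M x x) (θ x * φ x) 1 *
        pp β (flT M θ x 1 ∘ π) (flP M φ x 1 ∘ π) ((flM M x 1).submatrix π π)) := by
  set r : ℝ := 2 / (1 + ‖M x x‖) with hr
  have hn := norm_nonneg (M x x)
  have hr1 : 1 < r := by rw [hr, lt_div_iff₀ (by positivity)]; linarith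
  have hrm : r * ‖M x x‖ < 1 := by
    rw [hr, div_mul_eq_mul_div, div_lt_one (by positivity)]; linarith
  have hslit : ∀ t ∈ Metric.ball (0 : ℂ) r, 1 - t * M x x ∈ Complex.slitPlane := by
    intro t ht
    rw [mem_ball_zero_iff] at ht
    left
    have h1 : ‖t * M x x‖ < 1 := by
      rw [norm_mul]
      exact lt_of_le_of_lt (mul_le_mul_of_nonneg_right ht.le hn) hrm
    have h2 := Complex.re_le_norm (t * M x x)
    simp only [Complex.sub_re, Complex.one_re]
    linarith
  let F : ℕ → ℂ → ℂ := fun k t => pref β (M x x) (θ x * φ x) t *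
    pp β (flT M θ x t ∘ Sum.elim π (fun _ : Fin k => x))
      (flP M φ x t ∘ Sum.elim π (fun _ : Fin k => x))
      ((flM M x t).submatrix (Sum.elim π (fun _ : Fin k => x)) (Sum.elim π (fun _ : Fin k => x)))
  have hF : ∀ k, ∀ t ∈ Metric.ball (0 : ℂ) r, HasDerivAt (F k) (F (k + 1) t) t := by
    intro k t ht
    have := flow_hasDerivAt β θ φ M x (Sum.elim π (fun _ : Fin k => x)) t (hslit t ht)
    obtain ⟨e, he⟩ := exists_fin_equiv π x k
    refine this.congr_deriv ?_
    symm
    simp only [F]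
    rw [← pp_equiv e, Function.comp_assoc, Function.comp_assoc, Matrix.submatrix_submatrix, he]
  have hit : ∀ k, ∀ t ∈ Metric.ball (0 : ℂ) r, iteratedDeriv k (F 0) t = F k t := by
    intro k
    induction k with
    | zero => intro t _; simp
    | succ k ih =>
      intro t ht
      rw [iteratedDeriv_succ]
      have : iteratedDeriv k (F 0) =ᶠ[nhds t] F k := by
        filter_upwards [Metric.isOpen_ball.mem_nhds ht] with s hs using ih s hs
      rw [this.deriv_eq, (hF k t ht).deriv]
  have hdiff : DifferentiableOn ℂ (F 0) (Metric.ball 0 r) := fun t ht =>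
    (hF 0 t ht).differentiableAt.differentiableWithinAt
  have h1 : (1 : ℂ) ∈ Metric.ball (0 : ℂ) r := by simpa using hr1
  have h0 : (0 : ℂ) ∈ Metric.ball (0 : ℂ) r := by simp; linarith
  have hs := Complex.hasSum_taylorSeries_on_ball hdiff h1
  have hF1 : F 0 1 = pref β (M x x) (θ x * φ x) 1 *
        pp β (flT M θ x 1 ∘ π) (flP M φ x 1 ∘ π) ((flM M x 1).submatrix π π) := by
    simp only [F]
    rw [← pp_equiv (Equiv.sumEmpty τ (Fin 0)).symm]
    rfl
  rw [hF1] at hs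
  refine (congrArg (fun f => HasSum f _) (funext fun k => ?_)).mp hs
  rw [hit k 0 h0]
  have g0 : pref β (M x x) (θ x * φ x) 0 = 1 := by simp [pref]
  have g1 : flT M θ x 0 = θ := by funext; simp [flT, fl]
  have g2 : flP M φ x 0 = φ := by funext; simp [flP, fl]
  have g3 : flM M x 0 = M := by funext; simp [flM, fl]
  simp only [F, g0, g1, g2, g3]
  simp

theorem one_index {σ τ : Type*} [Fintype τ] (β : ℝ) (θ φ : σ → ℝ) (M : Matrix σ σ ℝ)
    (x : σ) (π : τ → σ) (hx : |M x x| < 1) :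
    HasSum (fun k : ℕ => ((k.factorial : ℝ)⁻¹) *
        pp β (θ ∘ Sum.elim π (fun _ : Fin k => x)) (φ ∘ Sum.elim π (fun _ : Fin k => x))
          (M.submatrix (Sum.elim π (fun _ : Fin k => x)) (Sum.elim π (fun _ : Fin k => x))))
      (Real.exp (θ x * φ x / (1 - M x x)) / (1 - M x x) ^ β *
        pp β (flT M θ x 1 ∘ π) (flP M φ x 1 ∘ π) ((flM M x 1).submatrix π π)) := by
  have h := one_index_complex (β : ℂ) (fun a => (θ a : ℂ)) (fun a => (φ a : ℂ))
    (M.map (fun r : ℝ => (r : ℂ))) x π (by simpa using hx)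
  have hpos : 0 < 1 - M x x := by have := abs_lt.1 hx; linarith
  rw [← Complex.hasSum_ofReal]
  convert h using 1
  · funext k
    rw [Complex.ofReal_mul, ← Complex.ofRealHom_eq_coe (pp _ _ _ _), pp_map]
    push_cast
    rfl
  · rw [Complex.ofReal_mul, ← Complex.ofRealHom_eq_coe (pp _ _ _ _), pp_map]
    congr 1
    · rw [Real.rpow_def_of_pos hpos, ← Real.exp_sub, sub_eq_add_neg, Real.exp_add]
      simp only [pref, Matrix.map_apply, one_mul]
      push_cast
      rw [Complex.ofReal_log hpos.le]
      push_cast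
      congr 2
      ring
    · congr 1
      · funext a; simp [flT, fl]
      · funext a; simp [flP, fl]
      · ext a b; simp [flM, fl]

end flow

/-! ### Linear algebra of eliminating one index -/

section linalg

/-- Schur complement. -/
def schur {n : ℕ} (A : Matrix (Fin (n + 1)) (Fin (n + 1)) ℝ) : Matrix (Fin n) (Fin n) ℝ :=
  fun i j => fl (A 0 0) 1 (A i.succ j.succ) (A i.succ 0) (A 0 j.succ)

theorem det_schur {n : ℕ} (A : Matrix (Fin (n + 1)) (Fin (n + 1)) ℝ) (h : 1 - A 0 0 ≠ 0) :
    (1 - A).det = (1 - A 0 0) * (1 - schur A).det := by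
  let c : Fin (n + 1) → ℝ := Fin.cons 0 (fun i => (1 - A) i.succ 0 / (1 - A 0 0))
  let B : Matrix (Fin (n + 1)) (Fin (n + 1)) ℝ := fun i j => (1 - A) i j - c i * (1 - A) 0 j
  have h1 : (1 - A).det = B.det := by
    refine Matrix.det_eq_of_forall_row_eq_smul_add_const c 0 (by simp [c]) ?_
    intro i j
    simp [B, c]
  have h2 : ∀ i : Fin n, B i.succ 0 = 0 := by
    intro i
    simp only [B, c, Fin.cons_succ, Matrix.sub_apply, Matrix.one_apply_eq]
    field_simp
    ring
  rw [h1, Matrix.det_succ_column_zero, Fin.sum_univ_succ]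
  simp only [h2]
  have h3 : B.submatrix (Fin.succAbove 0) Fin.succ = 1 - schur A := by
    ext i j
    rw [Matrix.submatrix_apply, Fin.succAbove_zero]
    have hz : (0 : Fin (n + 1)) ≠ j.succ := (Fin.succ_ne_zero j).symm
    simp only [B, c, Fin.cons_succ, Matrix.sub_apply, schur, fl, Matrix.one_apply, Fin.succ_inj,
      Fin.succ_ne_zero, hz, if_false]
    field_simp
    ring
  rw [h3]
  simp [B, c]

theorem elim_one {n : ℕ} (A : Matrix (Fin (n + 1)) (Fin (n + 1)) ℝ) (h : 1 - A 0 0 ≠ 0)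
    (hd : (1 - schur A).det ≠ 0) (c : ℝ) (u v : Fin (n + 1) → ℝ) :
    c + u ⬝ᵥ ((1 - A)⁻¹ *ᵥ v) = fl (A 0 0) 1 c (u 0) (v 0) +
      (fun j : Fin n => fl (A 0 0) 1 (u j.succ) (u 0) (A 0 j.succ)) ⬝ᵥ
        ((1 - schur A)⁻¹ *ᵥ (fun i : Fin n => fl (A 0 0) 1 (v i.succ) (A i.succ 0) (v 0))) := by
  have hdA : IsUnit (1 - A).det := by
    rw [det_schur A h]
    exact (mul_ne_zero h hd).isUnit
  set y := (1 - A)⁻¹ *ᵥ v with hy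
  have hv : (1 - A) *ᵥ y = v := by
    rw [hy, Matrix.mulVec_mulVec, Matrix.mul_nonsing_inv _ hdA, Matrix.one_mulVec]
  have hrow : ∀ i, v i = y i - (A i 0 * y 0 + ∑ j : Fin n, A i j.succ * y j.succ) := by
    intro i
    rw [← hv, Matrix.sub_mulVec, Matrix.one_mulVec, Pi.sub_apply]
    simp only [Matrix.mulVec, dotProduct, Fin.sum_univ_succ]
  have hy0 : y 0 = (v 0 + ∑ j : Fin n, A 0 j.succ * y j.succ) / (1 - A 0 0) := by
    rw [eq_div_iff h]
    have := hrow 0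
    linear_combination -this
  have hy1 : (1 - schur A)⁻¹ *ᵥ (fun i : Fin n => fl (A 0 0) 1 (v i.succ) (A i.succ 0) (v 0)) =
      fun i => y i.succ := by
    have : (1 - schur A) *ᵥ (fun i => y i.succ) =
        (fun i : Fin n => fl (A 0 0) 1 (v i.succ) (A i.succ 0) (v 0)) := by
      funext i
      rw [Matrix.sub_mulVec, Matrix.one_mulVec, Pi.sub_apply]
      have e : (schur A *ᵥ fun i => y i.succ) i = ∑ j : Fin n, A i.succ j.succ * y j.succ +
          A i.succ 0 / (1 - A 0 0) * ∑ j : Fin n, A 0 j.succ * y j.succ := by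
        simp only [Matrix.mulVec, dotProduct, schur, fl]
        rw [Finset.mul_sum, ← Finset.sum_add_distrib]
        refine Finset.sum_congr rfl fun j _ => ?_
        field_simp
      rw [e]
      simp only [fl]
      rw [hrow i.succ, hy0]
      field_simp
      ring
    rw [← this, Matrix.mulVec_mulVec, Matrix.nonsing_inv_mul _ hd.isUnit, Matrix.one_mulVec]
  rw [hy1]
  have e : ((fun j : Fin n => fl (A 0 0) 1 (u j.succ) (u 0) (A 0 j.succ)) ⬝ᵥ fun i => y i.succ) =
      ∑ j : Fin n, u j.succ * y j.succ +
          u 0 / (1 - A 0 0) * ∑ j : Fin n, A 0 j.succ * y j.succ := by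
    simp only [dotProduct, fl]
    rw [Finset.mul_sum, ← Finset.sum_add_distrib]
    refine Finset.sum_congr rfl fun j _ => ?_
    field_simp
  rw [e]
  simp only [dotProduct, Fin.sum_univ_succ, fl]
  rw [hy0]
  field_simp
  ring

end linalg

/-! ### Absolute values -/

theorem pp_nonneg {τ : Type*} [Fintype τ] (β : ℝ) (θ φ : τ → ℝ) (M : Matrix τ τ ℝ)
    (hβ : 0 ≤ β) (hθ : ∀ a, 0 ≤ θ a) (hφ : ∀ a, 0 ≤ φ a) (hM : ∀ a b, 0 ≤ M a b) :
    0 ≤ pp β θ φ M := by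
  unfold pp
  refine Finset.sum_nonneg fun f _ => ?_
  refine mul_nonneg (pow_nonneg hβ _) (mul_nonneg ?_ (Finset.prod_nonneg fun a _ => hθ a))
  refine Finset.prod_nonneg fun a _ => ?_
  cases f a with
  | none => exact hφ a
  | some b => exact hM a b

theorem pp_abs_le {τ : Type*} [Fintype τ] (β : ℝ) (θ φ : τ → ℝ) (M : Matrix τ τ ℝ) :
    |pp β θ φ M| ≤ pp |β| (fun a => |θ a|) (fun a => |φ a|) (M.map fun r => |r|) := by
  unfold pp
  refine (Finset.abs_sum_le_sum_abs _ _).trans (Finset.sum_le_sum fun f _ => ?_)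
  rw [abs_mul, abs_pow, abs_mul, Finset.abs_prod, Finset.abs_prod]
  apply le_of_eq
  congr 2
  refine Finset.prod_congr rfl fun a _ => ?_
  cases f a <;> simp [wt]

/-! ### Induction -/

section main
variable {τ : Type*} [Fintype τ]

/-- The map from repeated indices to indices. -/
def rp (τ : Type*) {n : ℕ} (r : Fin n → ℕ) : τ ⊕ ((i : Fin n) × Fin (r i)) → τ ⊕ Fin n :=
  Sum.map id Sigma.fst

/-- The general term. -/
def term {n : ℕ} (β : ℝ) (θ φ : τ ⊕ Fin n → ℝ) (M : Matrix (τ ⊕ Fin n) (τ ⊕ Fin n) ℝ)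
    (r : Fin n → ℕ) : ℝ :=
  ((∏ i, (r i).factorial : ℕ) : ℝ)⁻¹ *
    pp β (θ ∘ rp τ r) (φ ∘ rp τ r) (M.submatrix (rp τ r) (rp τ r))

/-- The value of the series. -/
def res {n : ℕ} (β : ℝ) (θ φ : τ ⊕ Fin n → ℝ) (M : Matrix (τ ⊕ Fin n) (τ ⊕ Fin n) ℝ) : ℝ :=
  Real.exp (0 + (fun i => θ (Sum.inr i)) ⬝ᵥ
      ((1 - M.toBlocks₂₂)⁻¹ *ᵥ fun i => φ (Sum.inr i))) *
    pp β (fun b => θ (Sum.inl b) + (fun i => θ (Sum.inr i)) ⬝ᵥ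
        ((1 - M.toBlocks₂₂)⁻¹ *ᵥ fun i => M (Sum.inr i) (Sum.inl b)))
      (fun a => φ (Sum.inl a) + (fun i => M (Sum.inl a) (Sum.inr i)) ⬝ᵥ
        ((1 - M.toBlocks₂₂)⁻¹ *ᵥ fun i => φ (Sum.inr i)))
      (Matrix.of fun a b => M (Sum.inl a) (Sum.inl b) + (fun i => M (Sum.inl a) (Sum.inr i)) ⬝ᵥ
        ((1 - M.toBlocks₂₂)⁻¹ *ᵥ fun i => M (Sum.inr i) (Sum.inl b))) /
    (1 - M.toBlocks₂₂).det ^ β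

/-- Inclusion of the remaining indices. -/
def inc (τ : Type*) (n : ℕ) : τ ⊕ Fin n → τ ⊕ Fin (n + 1) := Sum.map id Fin.succ

theorem exists_rep_equiv (τ : Type*) {n : ℕ} (r : Fin (n + 1) → ℕ) :
    ∃ e : (τ ⊕ ((i : Fin n) × Fin (r i.succ))) ⊕ Fin (r 0) ≃ τ ⊕ ((i : Fin (n + 1)) × Fin (r i)),
      rp τ r ∘ e = Sum.elim (inc τ n ∘ rp τ (fun i => r i.succ)) (fun _ => Sum.inr 0) := by
  let g : (τ ⊕ ((i : Fin n) × Fin (r i.succ))) ⊕ Fin (r 0) →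
      τ ⊕ ((i : Fin (n + 1)) × Fin (r i)) :=
    Sum.elim (Sum.elim Sum.inl (fun p => Sum.inr ⟨p.1.succ, p.2⟩)) (fun y => Sum.inr ⟨0, y⟩)
  have hg : Function.Bijective g := by
    constructor
    · rintro ((a | ⟨i, y⟩) | z) ((a' | ⟨i', y'⟩) | z') h <;> simp [g] at h ⊢
      · exact h
      · obtain ⟨rfl, h2⟩ := h
        simpa using h2
      · exact absurd h.1.symm (Fin.succ_ne_zero _)
      · exact h
    · rintro (a | ⟨i, y⟩)
      · exact ⟨Sum.inl (Sum.inl a), rfl⟩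
      · induction i using Fin.cases with
        | zero => exact ⟨Sum.inr y, rfl⟩
        | succ i => exact ⟨Sum.inl (Sum.inr ⟨i, y⟩), rfl⟩
  refine ⟨Equiv.ofBijective g hg, ?_⟩
  funext o
  rcases o with (a | ⟨i, y⟩) | z <;> rfl

theorem term_succ {n : ℕ} (β : ℝ) (θ φ : τ ⊕ Fin (n + 1) → ℝ)
    (M : Matrix (τ ⊕ Fin (n + 1)) (τ ⊕ Fin (n + 1)) ℝ) (r : Fin (n + 1) → ℕ) :
    term β θ φ M r = ((∏ i : Fin n, (r i.succ).factorial : ℕ) : ℝ)⁻¹ *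
      (((r 0).factorial : ℝ)⁻¹ *
        pp β (θ ∘ Sum.elim (inc τ n ∘ rp τ (fun i => r i.succ)) (fun _ : Fin (r 0) => Sum.inr 0))
          (φ ∘ Sum.elim (inc τ n ∘ rp τ (fun i => r i.succ)) (fun _ : Fin (r 0) => Sum.inr 0))
          (M.submatrix
            (Sum.elim (inc τ n ∘ rp τ (fun i => r i.succ)) (fun _ : Fin (r 0) => Sum.inr 0))
            (Sum.elim (inc τ n ∘ rp τ (fun i => r i.succ)) (fun _ : Fin (r 0) => Sum.inr 0)))) := by
  obtain ⟨e, he⟩ := exists_rep_equiv τ r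
  unfold term
  rw [← pp_equiv e, Function.comp_assoc, Function.comp_assoc, Matrix.submatrix_submatrix, he,
    Fin.prod_univ_succ, Nat.cast_mul, mul_inv]
  ring

theorem res_succ {n : ℕ} (β : ℝ) (θ φ : τ ⊕ Fin (n + 1) → ℝ)
    (M : Matrix (τ ⊕ Fin (n + 1)) (τ ⊕ Fin (n + 1)) ℝ)
    (h : 0 < 1 - M (Sum.inr 0) (Sum.inr 0)) (hd : 0 < (1 - schur M.toBlocks₂₂).det) :
    Real.exp (θ (Sum.inr 0) * φ (Sum.inr 0) / (1 - M (Sum.inr 0) (Sum.inr 0))) /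
        (1 - M (Sum.inr 0) (Sum.inr 0)) ^ β *
      res β (flT M θ (Sum.inr 0) 1 ∘ inc τ n) (flP M φ (Sum.inr 0) 1 ∘ inc τ n)
        ((flM M (Sum.inr 0) 1).submatrix (inc τ n) (inc τ n)) = res β θ φ M := by
  have hA : ((flM M (Sum.inr 0) 1).submatrix (inc τ n) (inc τ n)).toBlocks₂₂ =
      schur M.toBlocks₂₂ := rfl
  have h' : 0 < 1 - M.toBlocks₂₂ 0 0 := h
  have e1 : M (Sum.inr 0) (Sum.inr 0) = M.toBlocks₂₂ 0 0 := rfl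
  have key := elim_one M.toBlocks₂₂ h'.ne' hd.ne'
  unfold res
  rw [hA, det_schur _ h'.ne', Real.mul_rpow h'.le hd.le, e1, div_mul_div_comm, ← mul_assoc,
    ← Real.exp_add]
  congr 1
  congr 1
  · congr 1
    rw [key, fl, zero_add, zero_add, one_mul, one_mul, add_right_inj]
    rfl
  · congr 1
    · funext b
      exact (key (θ (Sum.inl b)) (fun i => θ (Sum.inr i)) (fun i => M (Sum.inr i) (Sum.inl b))).symm
    · funext a
      exact (key (φ (Sum.inl a)) (fun i => M (Sum.inl a) (Sum.inr i)) (fun i => φ (Sum.inr i))).symm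
    · ext a b
      exact (key (M (Sum.inl a) (Sum.inl b)) (fun i => M (Sum.inl a) (Sum.inr i))
        (fun i => M (Sum.inr i) (Sum.inl b))).symm

theorem main_zero (β : ℝ) (θ φ : τ ⊕ Fin 0 → ℝ)
    (M : Matrix (τ ⊕ Fin 0) (τ ⊕ Fin 0) ℝ) :
    HasSum (term β θ φ M) (res β θ φ M) := by
  have h1 : res β θ φ M = term β θ φ M default := by
    unfold term
    rw [← pp_equiv (Equiv.sumEmpty τ _).symm]
    unfold res
    simp only [Matrix.det_fin_zero, Real.one_rpow, div_one, dotProduct, Finset.univ_eq_empty,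
      Finset.sum_empty, add_zero, Real.exp_zero, one_mul, Finset.prod_empty, Nat.cast_one, inv_one]
    congr 1
  rw [h1]
  exact hasSum_single default (fun b hb => absurd (Subsingleton.elim b default) hb)

theorem main_induction (n : ℕ) : ∀ (β : ℝ) (θ φ : τ ⊕ Fin n → ℝ)
    (M : Matrix (τ ⊕ Fin n) (τ ⊕ Fin n) ℝ),
    (∀ i j, |M (Sum.inr i) (Sum.inr j)| < 1 / (n + 1 : ℝ)) →
    0 < (1 - M.toBlocks₂₂).det ∧ HasSum (term β θ φ M) (res β θ φ M) := by
  induction n with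
  | zero =>
    intro β θ φ M _
    exact ⟨by simp, main_zero β θ φ M⟩
  | succ n ih =>
    have core : ∀ (β : ℝ) (θ φ : τ ⊕ Fin (n + 1) → ℝ)
        (M : Matrix (τ ⊕ Fin (n + 1)) (τ ⊕ Fin (n + 1)) ℝ),
        (∀ i j, |M (Sum.inr i) (Sum.inr j)| < 1 / ((n + 1 : ℕ) + 1 : ℝ)) →
        0 < (1 - M.toBlocks₂₂).det ∧ ∃ g : (Fin n → ℕ) → ℝ,
          (∀ r', HasSum (fun k => term β θ φ M (Fin.cons k r' : Fin (n + 1) → ℕ)) (g r')) ∧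
          HasSum g (res β θ φ M) := by
      intro β θ φ M hM
      push_cast at hM
      have hn : (0 : ℝ) ≤ n := Nat.cast_nonneg n
      have he : 1 / ((n : ℝ) + 1 + 1) < 1 := by
        rw [div_lt_one (by positivity)]; linarith
      have ha : |M (Sum.inr 0) (Sum.inr 0)| < 1 := (hM 0 0).trans he
      have hpos : 0 < 1 - M (Sum.inr 0) (Sum.inr 0) := by
        have := abs_lt.1 ha; linarith
      have hb : ∀ i j, |((flM M (Sum.inr 0) 1).submatrix (inc τ n) (inc τ n))
          (Sum.inr i) (Sum.inr j)| < 1 / ((n : ℝ) + 1) := by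
        intro i j
        have h1 := hM i.succ j.succ
        have h2 := hM i.succ 0
        have h3 := hM 0 j.succ
        have h4 := hM 0 0
        set e : ℝ := 1 / ((n : ℝ) + 1 + 1) with hee
        have he0 : 0 < e := by positivity
        have hE : 1 / ((n : ℝ) + 1) = e + e * e / (1 - e) := by
          have : 1 - e = ((n : ℝ) + 1) / ((n : ℝ) + 1 + 1) := by
            rw [hee]; field_simp; ring
          rw [this, hee]; field_simp
        have h5 : 1 - e ≤ 1 - M (Sum.inr 0) (Sum.inr 0) := by
          have := (abs_lt.1 h4).2; linarith
        have h6 : ((flM M (Sum.inr 0) 1).submatrix (inc τ n) (inc τ n))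
          (Sum.inr i) (Sum.inr j) = M (Sum.inr i.succ) (Sum.inr j.succ) +
            M (Sum.inr i.succ) (Sum.inr 0) * M (Sum.inr 0) (Sum.inr j.succ) /
              (1 - M (Sum.inr 0) (Sum.inr 0)) := by
          rw [Matrix.submatrix_apply]
          simp only [flM, fl, inc, Sum.map_inr, one_mul]
        rw [h6, hE]
        refine (abs_add_le _ _).trans_lt (add_lt_add_of_lt_of_le h1 ?_)
        rw [abs_div, abs_mul, abs_of_pos hpos]
        have : 0 < 1 - e := by linarith
        gcongr
      obtain ⟨hdet, hsum⟩ := ih β (flT M θ (Sum.inr 0) 1 ∘ inc τ n)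
        (flP M φ (Sum.inr 0) 1 ∘ inc τ n)
        ((flM M (Sum.inr 0) 1).submatrix (inc τ n) (inc τ n)) hb
      have hA : ((flM M (Sum.inr 0) 1).submatrix (inc τ n) (inc τ n)).toBlocks₂₂ =
        schur M.toBlocks₂₂ := rfl
      rw [hA] at hdet
      refine ⟨?_, _, ?_, (res_succ β θ φ M hpos hdet) ▸ hsum.mul_left _⟩
      · rw [det_schur _ hpos.ne']
        exact mul_pos hpos hdet
      · intro r'
        have h1 := (one_index β θ φ M (Sum.inr 0) (inc τ n ∘ rp τ r') ha).mul_left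
          (((∏ i : Fin n, (r' i).factorial : ℕ) : ℝ)⁻¹)
        have h2 : ∀ k, term β θ φ M (Fin.cons k r' : Fin (n + 1) → ℕ) = _ :=
          fun k => term_succ β θ φ M (Fin.cons k r' : Fin (n + 1) → ℕ)
        simp only [Fin.cons_succ, Fin.cons_zero] at h2
        simp only [h2]
        refine Eq.subst (motive := fun v => HasSum _ v) ?_ h1
        unfold term
        rw [Function.comp_assoc, Function.comp_assoc, Matrix.submatrix_submatrix]
        ring
    intro β θ φ M hM
    obtain ⟨hdet, g, hg1, hg2⟩ := core β θ φ M hM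
    refine ⟨hdet, ?_⟩
    let E : (Fin n → ℕ) × ℕ ≃ (Fin (n + 1) → ℕ) :=
      (Equiv.prodComm _ _).trans (Fin.consEquiv (fun _ => ℕ))
    rw [← E.hasSum_iff]
    have hE : ∀ p, E p = (Fin.cons p.2 p.1 : Fin (n + 1) → ℕ) := fun p => rfl
    obtain ⟨_, g', hg1', hg2'⟩ := core |β| (fun a => |θ a|) (fun a => |φ a|)
      (M.map fun r => |r|) (by simpa using hM)
    have hs' : Summable (term |β| (fun a => |θ a|) (fun a => |φ a|) (M.map fun r => |r|) ∘ E) := by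
      rw [summable_prod_of_nonneg]
      · refine ⟨fun r' => (hg1' r').summable, ?_⟩
        have : (fun r' => ∑' k, (term |β| (fun a => |θ a|) (fun a => |φ a|)
            (M.map fun r => |r|) ∘ E) (r', k)) = g' := by
          funext r'
          exact (hg1' r').tsum_eq
        rw [this]
        exact hg2'.summable
      · intro p
        refine mul_nonneg (by positivity) (pp_nonneg _ _ _ _ (abs_nonneg _) ?_ ?_ ?_)
        · intro a; exact abs_nonneg _
        · intro a; exact abs_nonneg _
        · intro a b; exact abs_nonneg _
    have hs : Summable (term β θ φ M ∘ E) := by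
      refine Summable.of_norm_bounded hs' fun p => ?_
      simp only [Function.comp, term, Real.norm_eq_abs]
      rw [abs_mul, abs_of_nonneg (by positivity)]
      exact mul_le_mul_of_nonneg_left (pp_abs_le _ _ _ _) (by positivity)
    have h3 := hs.hasSum.prod_fiberwise hg1
    rw [hg2.unique h3]
    exact hs.hasSum

end main

/-! ### Final assembly -/

section neumann

attribute [local instance] Matrix.linftyOpNormedRing
attribute [local instance] Matrix.linftyOpNormedAlgebra

theorem neumann {n : ℕ} (A : Matrix (Fin n) (Fin n) ℝ)
    (hA : ∀ i j, |A i j| < 1 / (n + 1 : ℝ)) : ∑' k : ℕ, A ^ k = (1 - A)⁻¹ := by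
  have hn : (0 : ℝ) ≤ n := Nat.cast_nonneg n
  have hA1 : ‖A‖ < 1 := by
    rw [Matrix.linfty_opNorm_def]
    have h1 : ∀ i, ∑ j, ‖A i j‖₊ ≤ (n : NNReal) / (n + 1) := by
      intro i
      have h2 : ((∑ j, ‖A i j‖₊ : NNReal) : ℝ) ≤ ((n : NNReal) / (n + 1) : NNReal) := by
        push_cast
        calc ∑ j, ‖A i j‖ ≤ ∑ _j : Fin n, 1 / (n + 1 : ℝ) :=
              Finset.sum_le_sum fun j _ => (hA i j).le
          _ = (n : ℝ) / (n + 1) := by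
              rw [Finset.sum_const, Finset.card_univ, Fintype.card_fin, nsmul_eq_mul]
              ring
      exact h2
    have h3 : (Finset.univ.sup fun i => ∑ j, ‖A i j‖₊) ≤ (n : NNReal) / (n + 1) :=
      Finset.sup_le fun i _ => h1 i
    have h4 : (((n : NNReal) / (n + 1) : NNReal) : ℝ) < 1 := by
      push_cast
      rw [div_lt_one (by positivity)]
      linarith
    exact lt_of_le_of_lt (NNReal.coe_le_coe.2 h3) h4
  haveI : CompleteSpace (Matrix (Fin n) (Fin n) ℝ) := FiniteDimensional.complete ℝ _
  symm
  exact Matrix.inv_eq_right_inv (mul_neg_geom_series A hA1)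

end neumann

/-- The Submatrix Partial Permutation MacMahon Master Theorem, for small `A`,
with `(I-A)⁻¹ = Σ_{k≥0} A^k`, `B̃ = B + U(I-A)⁻¹V`, `θ̃ = θ' + θ(I-A)⁻¹V` and
`φ̃ᵀ = φ'ᵀ + U(I-A)⁻¹φᵀ`. -/
theorem submatrix_partial_permutation_MMT (n' n : ℕ) (β : ℝ) :
    ∃ ε > (0 : ℝ), ∀ (B : Matrix (Fin n') (Fin n') ℝ) (U : Matrix (Fin n') (Fin n) ℝ)
      (V : Matrix (Fin n) (Fin n') ℝ) (A : Matrix (Fin n) (Fin n) ℝ)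
      (θ' φ' : Fin n' → ℝ) (θ φ : Fin n → ℝ),
      (∀ i j, |A i j| < ε) →
      ∑' r : Fin n → ℕ, ((∏ i, (r i).factorial : ℕ) : ℝ)⁻¹ *
          ppermB β (Sum.elim θ' fun k => θ k.1) (Sum.elim φ' fun k => φ k.1)
            (Matrix.fromBlocks B (repU U r) (repV V r) (repA A r))
        = Real.exp (θ ⬝ᵥ (∑' k : ℕ, A ^ k).mulVec φ) *
            ppermB β (θ' + Matrix.vecMul θ ((∑' k : ℕ, A ^ k) * V))
              (φ' + Matrix.mulVec (U * ∑' k : ℕ, A ^ k) φ)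
              (B + U * (∑' k : ℕ, A ^ k) * V)
            / Matrix.det (1 - A) ^ β := by
  refine ⟨1 / (n + 1 : ℝ), by positivity, ?_⟩
  intro B U V A θ' φ' θ φ hA
  obtain ⟨_, hs⟩ := main_induction (τ := Fin n') n β (Sum.elim θ' θ) (Sum.elim φ' φ)
    (Matrix.fromBlocks B U V A) hA
  rw [neumann A hA]
  have h1 : ∀ r : Fin n → ℕ, ((∏ i, (r i).factorial : ℕ) : ℝ)⁻¹ *
          ppermB β (Sum.elim θ' fun k => θ k.1) (Sum.elim φ' fun k => φ k.1)
            (Matrix.fromBlocks B (repU U r) (repV V r) (repA A r)) =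
      term β (Sum.elim θ' θ) (Sum.elim φ' φ) (Matrix.fromBlocks B U V A) r := by
    intro r
    rw [ppermB_eq, term]
    congr 2
    · funext k
      rcases k with k | k <;> rfl
    · funext k
      rcases k with k | k <;> rfl
    · ext k l
      rcases k with k | k <;> rcases l with l | l <;> rfl
  rw [tsum_congr h1, hs.tsum_eq, ppermB_eq]
  unfold res
  rw [Matrix.toBlocks_fromBlocks₂₂, zero_add]
  congr 3
  · funext a
    rw [Pi.add_apply, ← Matrix.mulVec_mulVec]
    rfl
  · ext a b
    rw [Matrix.of_apply, Matrix.add_apply, Matrix.mul_assoc]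
    rfl
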